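/- Comparability of intrinsic scaling parameters at intersecting stopping cylinders (Section 6, inequality (6.18)): Let u be a weak solution to the parabolic double-phase system. Let Λ > 0 and, for i ∈ {1,2}, let zᵢ ∈ Ω_T, λᵢ > 0 and ρᵢ > 0 satisfy Λ = λᵢ^p + a(zᵢ)λᵢ^q, Q_{ρᵢ}^{λᵢ}(zᵢ) ⊂ Ω_T, and ⨍⨍_{Q_{ρᵢ}^{λᵢ}(zᵢ)} (|∇u|^p + a(z)|∇u|^q + |F|^p + a(z)|F|^q) dz = λᵢ^p. Assume further that |a(z₂) − a(z₁)| ≤ [a]_α (10ρ₁)^α and that λ₂ ≥ 1. If λ₂ < λ₁, then λ₁ ≤ [2(1 + 10[a]_α M̃₁^{γ/p})]^{1/p} λ₂; in particular λ₁ ≤ (2K)^{1/p} λ₂, and consequently λ₂^{2−p} ≤ 2K λ₁^{2−p} and λ₂^{2−q} ≤ 2K λ₁^{2−q}. -/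

import Mathlib

noncomputable section

open MeasureTheory Set
open scoped ENNReal RealInnerProductSpace Topology

namespace DoublePhase

abbrev Rn (n : ℕ) : Type := EuclideanSpace ℝ (Fin n)
abbrev RN (N : ℕ) : Type := EuclideanSpace ℝ (Fin N)
abbrev RNn (N n : ℕ) : Type := EuclideanSpace ℝ (Fin N × Fin n)

variable {n N : ℕ}

/-- Time derivative of a space-time test function. -/
def timeDeriv (φ : Rn n × ℝ → RN N) (z : Rn n × ℝ) : RN N :=
  (EuclideanSpace.equiv (Fin N) ℝ).symm fun i => deriv (fun s => φ (z.1, s) i) z.2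

/-- Spatial gradient of a space-time test function, as an `ℝ^{Nn}`-valued map. -/
def spaceGrad (φ : Rn n × ℝ → RN N) (z : Rn n × ℝ) : RNn N n :=
  (EuclideanSpace.equiv (Fin N × Fin n) ℝ).symm fun ij =>
    fderiv ℝ (fun x => φ (x, z.2) ij.1) z.1 (EuclideanSpace.single ij.2 1)

/-- The standard parabolic cylinder `Q_r(z₀) = B_r(x₀) × (t₀ - r², t₀ + r²)`. -/
def Qcyl (z₀ : Rn n × ℝ) (r : ℝ) : Set (Rn n × ℝ) :=
  Metric.ball z₀.1 r ×ˢ Ioo (z₀.2 - r ^ 2) (z₀.2 + r ^ 2)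

/-- The cylinder `Q_{R,S}(z₀) = B_R(x₀) × (t₀ - S, t₀ + S)`. -/
def QRS (z₀ : Rn n × ℝ) (R S' : ℝ) : Set (Rn n × ℝ) :=
  Metric.ball z₀.1 R ×ˢ Ioo (z₀.2 - S') (z₀.2 + S')

/-- Weak solution to the parabolic double-phase system
`u_t - div 𝒜(z, ∇u) = - div (|F|^{p-2} F + a(z) |F|^{q-2} F)` in `Ω_T = Ω × (0,T)`.
Here `du` denotes the (weak) spatial gradient `∇u`. -/
structure IsWeakSolution (p q : ℝ) (Ω : Set (Rn n)) (T : ℝ)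
    (a : Rn n × ℝ → ℝ) (A : Rn n × ℝ → RNn N n → RNn N n)
    (u : Rn n × ℝ → RN N) (du F : Rn n × ℝ → RNn N n) : Prop where
  meas_u : Measurable u
  meas_du : Measurable du
  cont_L2 : ∀ t₀ ∈ Ioo (0:ℝ) T, Filter.Tendsto
      (fun t => ∫ x in Ω, ‖u (x, t) - u (x, t₀)‖ ^ 2)
      (nhdsWithin t₀ (Ioo (0:ℝ) T)) (nhds 0)
  mem_L2 : ∀ t ∈ Ioo (0:ℝ) T, IntegrableOn (fun x => ‖u (x, t)‖ ^ 2) Ω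
  mem_LqW1q : IntegrableOn (fun z => ‖u z‖ ^ q + ‖du z‖ ^ q) (Ω ×ˢ Ioo 0 T)
  weak_grad : ∀ ψ : Rn n × ℝ → ℝ, ContDiff ℝ (⊤ : ℕ∞) ψ →
      tsupport ψ ⊆ Ω ×ˢ Ioo 0 T → ∀ i : Fin N, ∀ j : Fin n,
      ∫ z in Ω ×ˢ Ioo 0 T,
        u z i * fderiv ℝ (fun x => ψ (x, z.2)) z.1 (EuclideanSpace.single j 1)
      = - ∫ z in Ω ×ˢ Ioo 0 T, du z (i, j) * ψ z
  weak_form : ∀ φ : Rn n × ℝ → RN N, ContDiff ℝ (⊤ : ℕ∞) φ →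
      tsupport φ ⊆ Ω ×ˢ Ioo 0 T →
      ∫ z in Ω ×ˢ Ioo 0 T,
        (-(⟪u z, timeDeriv φ z⟫) + ⟪A z (du z), spaceGrad φ z⟫)
      = ∫ z in Ω ×ˢ Ioo 0 T,
        ⟪(‖F z‖ ^ (p - 2) + a z * ‖F z‖ ^ (q - 2)) • F z, spaceGrad φ z⟫

/-- The standing assumptions of the paper: structure conditions, Hölder continuity of the
coefficient `a`, the relation between `p`, `q` and `α`, and a weak solution `u`. -/
structure Setting (n N : ℕ) where
  p : ℝ
  q : ℝ
  α : ℝ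
  ν : ℝ
  L : ℝ
  Ca : ℝ
  Ω : Set (Rn n)
  T : ℝ
  a : Rn n × ℝ → ℝ
  A : Rn n × ℝ → RNn N n → RNn N n
  u : Rn n × ℝ → RN N
  du : Rn n × ℝ → RNn N n
  F : Rn n × ℝ → RNn N n
  hn : 2 ≤ n
  hN : 1 ≤ N
  hp : 2 ≤ p
  hpq : p < q
  hΩ : IsOpen Ω
  hΩb : Bornology.IsBounded Ω
  hT : 0 < T
  hα : 0 < α ∧ α ≤ 1
  hq : q ≤ p + 2 * α / (n + 2)
  ha_nonneg : ∀ z, 0 ≤ a z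
  ha_bdd : BddAbove (a '' (Ω ×ˢ Ioo 0 T))
  hCa : 0 ≤ Ca
  ha_x : ∀ x ∈ Ω, ∀ y ∈ Ω, ∀ t ∈ Ioo (0:ℝ) T, |a (x, t) - a (y, t)| ≤ Ca * ‖x - y‖ ^ α
  ha_t : ∀ x ∈ Ω, ∀ t ∈ Ioo (0:ℝ) T, ∀ s ∈ Ioo (0:ℝ) T,
      |a (x, t) - a (x, s)| ≤ Ca * |t - s| ^ (α / 2)
  hν : 0 < ν
  hνL : ν ≤ L
  hA_coer : ∀ᵐ z ∂(volume.restrict (Ω ×ˢ Ioo 0 T)), ∀ ξ : RNn N n,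
      ν * (‖ξ‖ ^ p + a z * ‖ξ‖ ^ q) ≤ ⟪A z ξ, ξ⟫
  hA_bdd : ∀ᵐ z ∂(volume.restrict (Ω ×ˢ Ioo 0 T)), ∀ ξ : RNn N n,
      ‖A z ξ‖ ≤ L * (‖ξ‖ ^ (p - 1) + a z * ‖ξ‖ ^ (q - 1))
  hF : IntegrableOn (fun z => ‖F z‖ ^ p + a z * ‖F z‖ ^ q) (Ω ×ˢ Ioo 0 T)
  hsol : IsWeakSolution p q Ω T a A u du F

namespace Setting

variable {n N : ℕ} (S : Setting n N)

/-- The space-time cylinder `Ω_T = Ω × (0,T)`. -/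
def ΩT : Set (Rn n × ℝ) := S.Ω ×ˢ Ioo 0 S.T

/-- `H(z, |∇u|) = |∇u|^p + a(z) |∇u|^q`. -/
def Hdu (z : Rn n × ℝ) : ℝ := ‖S.du z‖ ^ S.p + S.a z * ‖S.du z‖ ^ S.q

/-- `H(z, |F|) = |F|^p + a(z) |F|^q`. -/
def HF (z : Rn n × ℝ) : ℝ := ‖S.F z‖ ^ S.p + S.a z * ‖S.F z‖ ^ S.q

/-- The `(p,q)`-growth function `g_{z₀}(s) = s^p + a(z₀) s^q`. -/
def g (z₀ : Rn n × ℝ) (s : ℝ) : ℝ := s ^ S.p + S.a z₀ * s ^ S.q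

/-- `M₁ = ∬_{Ω_T} (|∇u|^p + a|∇u|^q + |F|^p + a|F|^q) dz`. -/
def M1 : ℝ := ∫ z in S.ΩT, (S.Hdu z + S.HF z)

/-- `M₂ = sup_{t ∈ (0,T)} ∫_Ω |u(x,t)|² dx`. -/
def M2 : ℝ := ⨆ t ∈ Ioo (0:ℝ) S.T, ∫ x in S.Ω, ‖S.u (x, t)‖ ^ 2

/-- `γ = α p / (n+2)`. -/
def gam : ℝ := S.α * S.p / (n + 2)

/-- `M̃₁ = M₁ / (2 |B₁|)`. -/
def Mt1 : ℝ := S.M1 / (2 * (volume (Metric.ball (0 : Rn n) 1)).toReal)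

/-- `K = 1 + 40 [a]_α M̃₁^{γ/p}`. -/
def Kc : ℝ := 1 + 40 * S.Ca * S.Mt1 ^ (S.gam / S.p)

/-- The covering constant `c_v = 10 K`. -/
def cv : ℝ := 10 * S.Kc

/-- The `p`-intrinsic cylinder `Q_ρ^λ(z₀) = B_ρ(x₀) × (t₀ - λ^{2-p}ρ², t₀ + λ^{2-p}ρ²)`. -/
def Qp (z₀ : Rn n × ℝ) (l ρ : ℝ) : Set (Rn n × ℝ) :=
  Metric.ball z₀.1 ρ ×ˢ Ioo (z₀.2 - l ^ (2 - S.p) * ρ ^ 2) (z₀.2 + l ^ (2 - S.p) * ρ ^ 2)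

/-- The `(p,q)`-intrinsic cylinder
`G_ρ^λ(z₀) = B_ρ(x₀) × (t₀ - λ²ρ²/g_{z₀}(λ), t₀ + λ²ρ²/g_{z₀}(λ))`. -/
def Gpq (z₀ : Rn n × ℝ) (l ρ : ℝ) : Set (Rn n × ℝ) :=
  Metric.ball z₀.1 ρ ×ˢ
    Ioo (z₀.2 - l ^ 2 / S.g z₀ l * ρ ^ 2) (z₀.2 + l ^ 2 / S.g z₀ l * ρ ^ 2)

/-- `inf` of the coefficient `a` over a set. -/
def infa (A : Set (Rn n × ℝ)) : ℝ := sInf (S.a '' A)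

/-- The super-level set `E(Λ)`. -/
def Eset (Λ : ℝ) : Set (Rn n × ℝ) := {z ∈ S.ΩT | Λ < S.Hdu z}

/-- The super-level set `Φ(Λ)`. -/
def Φset (Λ : ℝ) : Set (Rn n × ℝ) := {z ∈ S.ΩT | Λ < S.HF z}

/-- `S(u)_{z₀;ρ}^{λ^p}`. -/
def Sp (z₀ : Rn n × ℝ) (l ρ : ℝ) : ℝ :=
  ⨆ t ∈ Ioo (z₀.2 - l ^ (2 - S.p) * ρ ^ 2) (z₀.2 + l ^ (2 - S.p) * ρ ^ 2),
    ⨍ x in Metric.ball z₀.1 ρ, ‖S.u (x, t) - ⨍ w in S.Qp z₀ l ρ, S.u w‖ ^ 2 / ρ ^ 2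

/-- `S(u)_{z₀;ρ}^{g(λ)}`. -/
def SG (z₀ : Rn n × ℝ) (l ρ : ℝ) : ℝ :=
  ⨆ t ∈ Ioo (z₀.2 - l ^ 2 / S.g z₀ l * ρ ^ 2) (z₀.2 + l ^ 2 / S.g z₀ l * ρ ^ 2),
    ⨍ x in Metric.ball z₀.1 ρ, ‖S.u (x, t) - ⨍ w in S.Gpq z₀ l ρ, S.u w‖ ^ 2 / ρ ^ 2

/-- Condition (4.3): `K λ^p ≥ a(z₀) λ^q` and the `p`-intrinsic average bound on `Q_{4ρ}^λ(z₀)`. -/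
def cond43 (z₀ : Rn n × ℝ) (l ρ : ℝ) : Prop :=
  S.a z₀ * l ^ S.q ≤ S.Kc * l ^ S.p ∧
  (⨍ z in S.Qp z₀ l (4 * ρ), (S.Hdu z + S.HF z)) < l ^ S.p

/-- Condition (4.4): `K λ^p ≤ a(z₀) λ^q`, comparability of `a` on `G_{4ρ}^λ(z₀)` and the
`(p,q)`-intrinsic average bound. -/
def cond44 (z₀ : Rn n × ℝ) (l ρ : ℝ) : Prop :=
  S.Kc * l ^ S.p ≤ S.a z₀ * l ^ S.q ∧
  (∀ z ∈ S.Gpq z₀ l (4 * ρ), S.a z₀ / 2 ≤ S.a z ∧ S.a z ≤ 2 * S.a z₀) ∧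
  (⨍ z in S.Gpq z₀ l (4 * ρ), (S.Hdu z + S.HF z)) < S.g z₀ l

/-- Condition (5.1). -/
def cond51 (z₀ : Rn n × ℝ) (l ρ : ℝ) : Prop :=
  S.a z₀ * l ^ S.q ≤ S.Kc * l ^ S.p ∧
  (∀ s ∈ Ioc ρ (S.cv * (2 * ρ)), (⨍ z in S.Qp z₀ l s, (S.Hdu z + S.HF z)) < l ^ S.p) ∧
  (⨍ z in S.Qp z₀ l ρ, (S.Hdu z + S.HF z)) = l ^ S.p

/-- Condition (5.2). -/
def cond52 (z₀ : Rn n × ℝ) (l ρ : ℝ) : Prop :=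
  S.Kc * l ^ S.p ≤ S.a z₀ * l ^ S.q ∧
  (∀ z ∈ S.Gpq z₀ l (4 * ρ), S.a z₀ / 2 ≤ S.a z ∧ S.a z ≤ 2 * S.a z₀) ∧
  (∀ s ∈ Ioc ρ (S.cv * (2 * ρ)), (⨍ z in S.Gpq z₀ l s, (S.Hdu z + S.HF z)) < S.g z₀ l) ∧
  (⨍ z in S.Gpq z₀ l ρ, (S.Hdu z + S.HF z)) = S.g z₀ l

end Setting

namespace Setting

variable {n N : ℕ} (S : Setting n N)

theorem aux_contOn_a : ContinuousOn S.a S.ΩT := by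
  rintro ⟨x₀, t₀⟩ ⟨hx₀, ht₀⟩
  have hα := S.hα.1
  rw [ContinuousWithinAt, tendsto_iff_dist_tendsto_zero]
  have hlim : Filter.Tendsto (fun z : Rn n × ℝ =>
      S.Ca * ‖z.1 - x₀‖ ^ S.α + S.Ca * |z.2 - t₀| ^ (S.α / 2))
      (nhdsWithin (x₀, t₀) S.ΩT) (nhds 0) := by
    have hc : Continuous (fun z : Rn n × ℝ =>
      S.Ca * ‖z.1 - x₀‖ ^ S.α + S.Ca * |z.2 - t₀| ^ (S.α / 2)) := by
      refine Continuous.add ?_ ?_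
      · exact continuous_const.mul ((by fun_prop : Continuous fun z : Rn n × ℝ => ‖z.1 - x₀‖).rpow_const
          (fun _ => Or.inr hα.le))
      · exact continuous_const.mul ((by fun_prop : Continuous fun z : Rn n × ℝ => |z.2 - t₀|).rpow_const
          (fun _ => Or.inr (by positivity)))
    have := (hc.tendsto (x₀, t₀)).mono_left (nhdsWithin_le_nhds (s := S.ΩT))
    simpa [Real.zero_rpow hα.ne', Real.zero_rpow (by positivity : S.α / 2 ≠ 0)] using this
  refine squeeze_zero' (Filter.Eventually.of_forall fun _ => dist_nonneg) ?_ hlim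
  filter_upwards [self_mem_nhdsWithin] with z hz
  obtain ⟨x, t⟩ := z
  obtain ⟨hx, ht⟩ := hz
  rw [Real.dist_eq]
  calc |S.a (x, t) - S.a (x₀, t₀)| ≤ |S.a (x, t) - S.a (x₀, t)| + |S.a (x₀, t) - S.a (x₀, t₀)| :=
        abs_sub_le _ _ _
    _ ≤ _ := add_le_add (S.ha_x x hx x₀ hx₀ t ht) (S.ha_t x₀ hx₀ t ht t₀ ht₀)

theorem aux_isOpen : IsOpen S.ΩT := S.hΩ.prod isOpen_Ioo

theorem aux_finite : volume S.ΩT ≠ ⊤ :=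
  (S.hΩb.prod (Metric.isBounded_Ioo 0 S.T)).measure_lt_top.ne

theorem aux_du_q : IntegrableOn (fun z => ‖S.du z‖ ^ S.q) S.ΩT := by
  have hm := S.hsol.meas_du
  refine Integrable.mono' S.hsol.mem_LqW1q (hm.norm.pow_const _).aestronglyMeasurable (Filter.Eventually.of_forall fun z => ?_)
  have h1 : 0 ≤ ‖S.du z‖ ^ S.q := by positivity
  have h2 : 0 ≤ ‖S.u z‖ ^ S.q := by positivity
  rw [Real.norm_of_nonneg h1]
  linarith

theorem aux_int_Hdu : IntegrableOn S.Hdu S.ΩT := by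
  have hm := S.hsol.meas_du
  have hp := S.hp
  have hpq := S.hpq
  have hfin : IsFiniteMeasure (volume.restrict S.ΩT) :=
    ⟨by rw [Measure.restrict_apply_univ]; exact S.aux_finite.lt_top⟩
  have h1 : IntegrableOn (fun z => ‖S.du z‖ ^ S.p) S.ΩT := by
    refine Integrable.mono' ((integrable_const (1:ℝ)).add S.aux_du_q) (hm.norm.pow_const _).aestronglyMeasurable
      (Filter.Eventually.of_forall fun z => ?_)
    have h1 : 0 ≤ ‖S.du z‖ ^ S.p := by positivity
    have h2 : 0 ≤ ‖S.du z‖ ^ S.q := by positivity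
    rw [Real.norm_of_nonneg h1]
    simp only [Pi.add_apply]
    rcases le_total ‖S.du z‖ 1 with h | h
    · have := Real.rpow_le_one (norm_nonneg _) h (by linarith : 0 ≤ S.p)
      linarith
    · have := Real.rpow_le_rpow_of_exponent_le h hpq.le
      linarith
  obtain ⟨C, hC⟩ := S.ha_bdd
  have hmeas : MeasurableSet S.ΩT := S.aux_isOpen.measurableSet
  have h2 : IntegrableOn (fun z => S.a z * ‖S.du z‖ ^ S.q) S.ΩT := by
    refine Integrable.bdd_mul (c := C) S.aux_du_q (S.aux_contOn_a.aestronglyMeasurable hmeas) ?_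
    filter_upwards [ae_restrict_mem hmeas] with z hz
    rw [Real.norm_of_nonneg (S.ha_nonneg z)]
    exact hC ⟨z, hz, rfl⟩
  exact h1.add h2

theorem aux_int : IntegrableOn (fun z => S.Hdu z + S.HF z) S.ΩT := S.aux_int_Hdu.add S.hF

theorem aux_nonneg (z : Rn n × ℝ) : 0 ≤ S.Hdu z + S.HF z := by
  have := S.ha_nonneg z
  unfold Hdu HF
  positivity

theorem aux_Mt1_nonneg : 0 ≤ S.Mt1 := by
  have : 0 ≤ S.M1 := integral_nonneg S.aux_nonneg
  unfold Mt1
  positivity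

theorem aux_vol (z : Rn n × ℝ) (l ρ : ℝ) (hl : 0 < l) (hρ : 0 < ρ) :
    volume.real (S.Qp z l ρ) =
      ρ ^ n * (volume (Metric.ball (0 : Rn n) 1)).toReal * (2 * (l ^ (2 - S.p) * ρ ^ 2)) := by
  have h0 : 0 < l ^ (2 - S.p) * ρ ^ 2 := by positivity
  rw [Measure.real, Qp, Measure.volume_eq_prod, Measure.prod_prod, ENNReal.toReal_mul,
    Measure.addHaar_ball_of_pos _ _ hρ, Real.volume_Ioo, ENNReal.toReal_mul,
    ENNReal.toReal_ofReal (by positivity), ENNReal.toReal_ofReal (by linarith)]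
  simp only [finrank_euclideanSpace, Fintype.card_fin]
  ring

theorem aux_radius (z : Rn n × ℝ) (l ρ : ℝ) (hl : 0 < l) (hρ : 0 < ρ)
    (hsub : S.Qp z l ρ ⊆ S.ΩT)
    (havg : (⨍ z in S.Qp z l ρ, (S.Hdu z + S.HF z)) = l ^ S.p) :
    l ^ 2 * ρ ^ (n + 2) ≤ S.Mt1 := by
  have hB : 0 < (volume (Metric.ball (0 : Rn n) 1)).toReal :=
    ENNReal.toReal_pos (Metric.measure_ball_pos _ _ one_pos).ne' measure_ball_lt_top.ne
  have hV := S.aux_vol z l ρ hl hρ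
  have hVpos : 0 < volume.real (S.Qp z l ρ) := by rw [hV]; positivity
  rw [setAverage_eq, smul_eq_mul] at havg
  have hle : ∫ z in S.Qp z l ρ, (S.Hdu z + S.HF z) ≤ S.M1 :=
    setIntegral_mono_set S.aux_int (Filter.Eventually.of_forall S.aux_nonneg)
      (LE.le.eventuallyLE hsub)
  have h1 : l ^ S.p * volume.real (S.Qp z l ρ) ≤ S.M1 := by
    rw [← havg, mul_comm, mul_inv_cancel_left₀ hVpos.ne']
    exact hle
  have h2 : l ^ S.p * l ^ (2 - S.p) = l ^ 2 := by
    rw [← Real.rpow_add hl, ← Real.rpow_natCast]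
    norm_num
  rw [Mt1, le_div_iff₀ (by positivity)]
  refine le_trans (le_of_eq ?_) h1
  rw [hV, ← h2]
  ring

theorem aux_radius_alpha (l ρ : ℝ) (hl : 0 < l) (hρ : 0 < ρ)
    (h : l ^ 2 * ρ ^ (n + 2) ≤ S.Mt1) :
    ρ ^ S.α * l ^ (2 * S.α / (n + 2)) ≤ S.Mt1 ^ (S.gam / S.p) := by
  have hp := S.hp
  have hα := S.hα.1
  have hg : S.gam / S.p = S.α / (n + 2) := by
    unfold gam
    have : S.p ≠ 0 := by positivity
    field_simp
  rw [hg]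
  refine le_trans (le_of_eq ?_) (Real.rpow_le_rpow (by positivity) h (by positivity))
  rw [Real.mul_rpow (by positivity) (by positivity), ← Real.rpow_natCast, ← Real.rpow_natCast,
    ← Real.rpow_mul hl.le, ← Real.rpow_mul hρ.le, mul_comm]
  congr 2
  · push_cast; ring
  · push_cast; field_simp

end Setting

/-- **Section 6, inequality (6.18)**: comparability of the intrinsic scaling parameters of
two intersecting stopping cylinders. -/
theorem lambda_comparable {n N : ℕ} (S : Setting n N) :
    ∀ Λ : ℝ, 0 < Λ →
    ∀ z₁ z₂ : Rn n × ℝ, ∀ l₁ l₂ ρ₁ ρ₂ : ℝ,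
      0 < l₁ → 1 ≤ l₂ → 0 < ρ₁ → 0 < ρ₂ →
      Λ = l₁ ^ S.p + S.a z₁ * l₁ ^ S.q → Λ = l₂ ^ S.p + S.a z₂ * l₂ ^ S.q →
      S.Qp z₁ l₁ ρ₁ ⊆ S.ΩT → S.Qp z₂ l₂ ρ₂ ⊆ S.ΩT →
      (⨍ z in S.Qp z₁ l₁ ρ₁, (S.Hdu z + S.HF z)) = l₁ ^ S.p →
      (⨍ z in S.Qp z₂ l₂ ρ₂, (S.Hdu z + S.HF z)) = l₂ ^ S.p →
      |S.a z₂ - S.a z₁| ≤ S.Ca * (10 * ρ₁) ^ S.α →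
      l₂ < l₁ →
      l₁ ≤ (2 * (1 + 10 * S.Ca * S.Mt1 ^ (S.gam / S.p))) ^ (1 / S.p) * l₂
        ∧ l₁ ≤ (2 * S.Kc) ^ (1 / S.p) * l₂
        ∧ l₂ ^ (2 - S.p) ≤ 2 * S.Kc * l₁ ^ (2 - S.p)
        ∧ l₂ ^ (2 - S.q) ≤ 2 * S.Kc * l₁ ^ (2 - S.q) := by
  intro Λ hΛ z₁ z₂ l₁ l₂ ρ₁ ρ₂ hl₁ hl₂ hρ₁ hρ₂ hΛ₁ hΛ₂ hs₁ hs₂ hav₁ hav₂ ha hlt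
  have hp := S.hp
  have hpq := S.hpq
  have hα := S.hα.1
  have hα1 := S.hα.2
  have hCa := S.hCa
  have hl₂0 : 0 < l₂ := by linarith
  have hq := S.hq
  have hM : 0 ≤ S.Mt1 ^ (S.gam / S.p) := Real.rpow_nonneg S.aux_Mt1_nonneg _
  have hr := S.aux_radius_alpha l₁ ρ₁ hl₁ hρ₁ (S.aux_radius z₁ l₁ ρ₁ hl₁ hρ₁ hs₁ hav₁)
  set M := S.Mt1 ^ (S.gam / S.p) with hMdef
  set e := 2 * S.α / ((n : ℝ) + 2) with he
  have he0 : 0 ≤ e := by positivity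
  have he1 : e ≤ 2 := by
    rw [he, div_le_iff₀ (by positivity)]
    have : (0:ℝ) ≤ n := by positivity
    nlinarith
  have h10 : (10 * ρ₁) ^ S.α ≤ 10 * ρ₁ ^ S.α := by
    rw [Real.mul_rpow (by norm_num) hρ₁.le]
    have : (10:ℝ) ^ S.α ≤ 10 ^ (1:ℝ) := Real.rpow_le_rpow_of_exponent_le (by norm_num) hα1
    rw [Real.rpow_one] at this
    gcongr
  have hkey1 : ρ₁ ^ S.α * l₂ ^ S.q ≤ M * l₂ ^ S.p := by
    have hA : l₂ ^ S.q ≤ l₂ ^ e * l₂ ^ S.p := by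
      rw [← Real.rpow_add hl₂0]
      exact Real.rpow_le_rpow_of_exponent_le hl₂ (by linarith)
    have hB : l₂ ^ e ≤ l₁ ^ e := Real.rpow_le_rpow hl₂0.le hlt.le he0
    calc ρ₁ ^ S.α * l₂ ^ S.q ≤ ρ₁ ^ S.α * (l₁ ^ e * l₂ ^ S.p) := by
          have : l₂ ^ e * l₂ ^ S.p ≤ l₁ ^ e * l₂ ^ S.p := by gcongr
          have := hA.trans this
          gcongr
      _ = (ρ₁ ^ S.α * l₁ ^ e) * l₂ ^ S.p := by ring
      _ ≤ _ := by gcongr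
  have hP : l₁ ^ S.p ≤ (1 + 10 * S.Ca * M) * l₂ ^ S.p := by
    have h1 : S.a z₂ ≤ S.a z₁ + S.Ca * (10 * ρ₁ ^ S.α) := by
      have := (abs_le.1 ha).2
      have := mul_le_mul_of_nonneg_left h10 hCa
      linarith
    have h2 : l₂ ^ S.q ≤ l₁ ^ S.q := Real.rpow_le_rpow hl₂0.le hlt.le (by linarith)
    have h3 := mul_le_mul_of_nonneg_left h2 (S.ha_nonneg z₁)
    have h4 := mul_le_mul_of_nonneg_right h1 (Real.rpow_nonneg hl₂0.le S.q)
    have h5 := mul_le_mul_of_nonneg_left hkey1 (by positivity : 0 ≤ 10 * S.Ca)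
    nlinarith
  have hCM : 0 ≤ S.Ca * M := by positivity
  have hK : S.Kc = 1 + 40 * S.Ca * M := rfl
  have hl₂p : 0 < l₂ ^ S.p := by positivity
  have hgen : ∀ C : ℝ, 1 + 10 * S.Ca * M ≤ C → l₁ ≤ C ^ (1 / S.p) * l₂ := by
    intro C hC
    have hC0 : 0 ≤ C := by nlinarith
    have h1 : l₁ ^ S.p ≤ C * l₂ ^ S.p := hP.trans (by gcongr)
    have h2 := Real.rpow_le_rpow (by positivity) h1 (by positivity : 0 ≤ 1 / S.p)
    rw [Real.mul_rpow hC0 hl₂p.le, ← Real.rpow_mul hl₁.le, ← Real.rpow_mul hl₂0.le,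
      mul_one_div_cancel (by positivity), Real.rpow_one, Real.rpow_one] at h2
    exact h2
  have hX : ∀ r : ℝ, r ≤ S.p + 2 → l₂ ^ (2 - r) ≤ 2 * S.Kc * l₁ ^ (2 - r) := by
    intro r hr
    have hX1 : 1 ≤ l₁ / l₂ := by rw [one_le_div hl₂0]; exact hlt.le
    have h1 : (l₁ / l₂) ^ (r - 2) ≤ (l₁ / l₂) ^ S.p :=
      Real.rpow_le_rpow_of_exponent_le hX1 (by linarith)
    have h2 : (l₁ / l₂) ^ S.p ≤ 2 * S.Kc := by
      rw [Real.div_rpow hl₁.le hl₂0.le, div_le_iff₀ hl₂p]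
      refine hP.trans ?_
      have : 1 + 10 * S.Ca * M ≤ 2 * S.Kc := by rw [hK]; nlinarith
      gcongr
    have h3 : l₂ ^ (2 - r) = (l₁ / l₂) ^ (r - 2) * l₁ ^ (2 - r) := by
      rw [Real.div_rpow hl₁.le hl₂0.le, div_mul_eq_mul_div, ← Real.rpow_add hl₁,
        show r - 2 + (2 - r) = 0 by ring, Real.rpow_zero, show 2 - r = -(r - 2) by ring,
        Real.rpow_neg hl₂0.le, one_div]
    rw [h3]
    exact mul_le_mul_of_nonneg_right (h1.trans h2) (by positivity)
  refine ⟨hgen _ (by nlinarith), hgen _ (by rw [hK]; nlinarith), hX _ (by linarith),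
    hX _ (by linarith)⟩

end DoublePhase
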